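/- arXiv:1807.06549 — 2 statements merged into one kernel-verified Lean document; each statement's English description precedes it below -/
import Mathlib

section
/- Let σ > 0, μ ≥ 0 and ω > 0. Define r := ω√((μσ−1)²ω² + (μ+σω²)²)/(1+σ²ω²), let θ ∈ (0,π) be the unique angle with cos(θ) = (μσ−1)ω²/((1+σ²ω²)r) and sin(θ) = (μ+σω²)ω/((1+σ²ω²)r), and set a := √r·cos(θ/2), b := √r·sin(θ/2). Then the functions h(x) := ((cosh(a(2−x)) − cos(2b)cosh(ax))cos(bx) − sin(2b)sin(bx)cosh(ax))/(cosh(2a) − cos(2b)) and g(x) := (sin(2b)cos(bx)sinh(ax) − (sinh(a(2−x)) + cos(2b)sinh(ax))sin(bx))/(cosh(2a) − cos(2b)) satisfy, for all x ∈ [0,1], the ordinary differential system σω g''(x) − μω g(x) − ω² h(x) − h''(x) = 0 and ω² g(x) + g''(x) + σω h''(x) − μω h(x) = 0, together with the boundary conditions h(0) = 1, h(1) = 0, g(0) = 0, g(1) = 0. -/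
/-!
Put `u = h + ig` and `λ = a + ib`. The real system is `(1 + iσω) u'' = (iμω - ω²) u`, and `r`, `θ`
are the modulus and argument of `(iμω - ω²) / (1 + iσω)`, so that `λ` is the principal square root
of this quotient. Product-to-sum formulas identify the given `h`, `g` as the real and imaginary
parts of `u(x) = sinh(λ(1 - x)) / sinh λ`, which solves `u'' = λ² u`, `u(0) = 1`, `u(1) = 0`.
-/

open Real

noncomputable section

/-- `r := ω√((μσ−1)²ω² + (μ+σω²)²)/(1+σ²ω²)`. -/
def rfreq (σ μ ω : ℝ) : ℝ :=
  ω * Real.sqrt ((μ * σ - 1) ^ 2 * ω ^ 2 + (μ + σ * ω ^ 2) ^ 2) / (1 + σ ^ 2 * ω ^ 2)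

/-- The unique angle `θ ∈ (0,π)` with `cos(θ) = (μσ−1)ω²/((1+σ²ω²)r)` and
`sin(θ) = (μ+σω²)ω/((1+σ²ω²)r)`; since the sine is positive it is given by `arccos`. -/
def θfreq (σ μ ω : ℝ) : ℝ :=
  Real.arccos ((μ * σ - 1) * ω ^ 2 / ((1 + σ ^ 2 * ω ^ 2) * rfreq σ μ ω))

/-- `a := √r·cos(θ/2)`. -/
def afreq (σ μ ω : ℝ) : ℝ := Real.sqrt (rfreq σ μ ω) * Real.cos (θfreq σ μ ω / 2)

/-- `b := √r·sin(θ/2)`. -/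
def bfreq (σ μ ω : ℝ) : ℝ := Real.sqrt (rfreq σ μ ω) * Real.sin (θfreq σ μ ω / 2)

section ComplexHyperbolic

open scoped ComplexConjugate

lemma re_cosh (z : ℂ) : (Complex.cosh z).re = Real.cosh z.re * Real.cos z.im := by
  conv_lhs => rw [← Complex.re_add_im z, Complex.cosh_add, Complex.cosh_mul_I, Complex.sinh_mul_I]
  simp [← Complex.ofReal_cosh, ← Complex.ofReal_sinh, ← Complex.ofReal_cos, ← Complex.ofReal_sin]

lemma im_cosh (z : ℂ) : (Complex.cosh z).im = Real.sinh z.re * Real.sin z.im := by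
  conv_lhs => rw [← Complex.re_add_im z, Complex.cosh_add, Complex.cosh_mul_I, Complex.sinh_mul_I]
  simp [← Complex.ofReal_cosh, ← Complex.ofReal_sinh, ← Complex.ofReal_cos, ← Complex.ofReal_sin]

lemma sinh_mul_sinh (z w : ℂ) :
    Complex.sinh z * Complex.sinh w = (Complex.cosh (z + w) - Complex.cosh (z - w)) / 2 := by
  rw [Complex.cosh_add, Complex.cosh_sub]
  ring

lemma re_sinh_mul_conj_sinh (z w : ℂ) :
    (Complex.sinh z * conj (Complex.sinh w)).re =
      (Real.cosh (z.re + w.re) * Real.cos (z.im - w.im) -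
        Real.cosh (z.re - w.re) * Real.cos (z.im + w.im)) / 2 := by
  rw [← Complex.sinh_conj, sinh_mul_sinh, Complex.div_ofNat_re, Complex.sub_re, re_cosh, re_cosh]
  simp [sub_eq_add_neg]

lemma im_sinh_mul_conj_sinh (z w : ℂ) :
    (Complex.sinh z * conj (Complex.sinh w)).im =
      (Real.sinh (z.re + w.re) * Real.sin (z.im - w.im) -
        Real.sinh (z.re - w.re) * Real.sin (z.im + w.im)) / 2 := by
  rw [← Complex.sinh_conj, sinh_mul_sinh, Complex.div_ofNat_im, Complex.sub_im, im_cosh, im_cosh]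
  simp [sub_eq_add_neg]

lemma normSq_sinh (z : ℂ) :
    Complex.normSq (Complex.sinh z) = (Real.cosh (2 * z.re) - Real.cos (2 * z.im)) / 2 := by
  rw [← Complex.ofReal_re (Complex.normSq _), ← Complex.mul_conj, re_sinh_mul_conj_sinh]
  simp [two_mul]

lemma sinh_ne_zero_of_re_ne_zero {z : ℂ} (hz : z.re ≠ 0) : Complex.sinh z ≠ 0 := by
  have one_lt : 1 < Real.cosh (2 * z.re) := Real.one_lt_cosh.mpr (mul_ne_zero two_ne_zero hz)
  rw [← Complex.normSq_pos, normSq_sinh]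
  linarith [Real.cos_le_one (2 * z.im)]

lemma div_eq_mul_conj_div_normSq (z w : ℂ) :
    z / w = z * conj w / (Complex.normSq w : ℂ) := by
  rw [div_eq_mul_inv, Complex.inv_def, ← mul_assoc, Complex.ofReal_inv, div_eq_mul_inv]

lemma re_sinh_div_sinh (z w : ℂ) :
    (Complex.sinh z / Complex.sinh w).re =
      (Real.cosh (z.re + w.re) * Real.cos (z.im - w.im) -
        Real.cosh (z.re - w.re) * Real.cos (z.im + w.im)) /
      (Real.cosh (2 * w.re) - Real.cos (2 * w.im)) := by
  rw [div_eq_mul_conj_div_normSq, Complex.div_ofReal_re, re_sinh_mul_conj_sinh, normSq_sinh,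
    div_div_div_cancel_right₀ two_ne_zero]

lemma im_sinh_div_sinh (z w : ℂ) :
    (Complex.sinh z / Complex.sinh w).im =
      (Real.sinh (z.re + w.re) * Real.sin (z.im - w.im) -
        Real.sinh (z.re - w.re) * Real.sin (z.im + w.im)) /
      (Real.cosh (2 * w.re) - Real.cos (2 * w.im)) := by
  rw [div_eq_mul_conj_div_normSq, Complex.div_ofReal_im, im_sinh_mul_conj_sinh, normSq_sinh,
    div_div_div_cancel_right₀ two_ne_zero]

end ComplexHyperbolic

lemma sq_complex_sqrt (z : ℂ) : z.sqrt ^ 2 = z :=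
  Complex.cpow_ofNat_inv_pow z 2

lemma complex_sqrt_re (z : ℂ) : z.sqrt.re = √‖z‖ * Real.cos (z.arg / 2) := by
  simpa [Complex.sqrt, Real.sqrt_eq_rpow, div_eq_mul_inv] using Complex.cpow_ofReal_re z 2⁻¹

lemma complex_sqrt_im (z : ℂ) : z.sqrt.im = √‖z‖ * Real.sin (z.arg / 2) := by
  simpa [Complex.sqrt, Real.sqrt_eq_rpow, div_eq_mul_inv] using Complex.cpow_ofReal_im z 2⁻¹

lemma re_ne_zero_of_sq_im_ne_zero {z : ℂ} (hz : (z ^ 2).im ≠ 0) : z.re ≠ 0 := by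
  contrapose! hz
  simp [sq, hz]

lemma deriv_deriv_continuousLinearMap_comp {𝕜 E F : Type*} [NontriviallyNormedField 𝕜]
    [NormedAddCommGroup E] [NormedSpace 𝕜 E] [NormedAddCommGroup F] [NormedSpace 𝕜 F]
    (L : E →L[𝕜] F) {u u' u'' : 𝕜 → E} (hu : ∀ x, HasDerivAt u (u' x) x)
    (hu' : ∀ x, HasDerivAt u' (u'' x) x) :
    deriv (deriv fun x => L (u x)) = fun x => L (u'' x) := by
  have deriv_eq : deriv (fun x => L (u x)) = fun x => L (u' x) :=
    funext fun x => (L.hasFDerivAt.comp_hasDerivAt x (hu x)).deriv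
  rw [deriv_eq]
  exact funext fun x => (L.hasFDerivAt.comp_hasDerivAt x (hu' x)).deriv

/-- The solution of `u'' = c² u`, `u 0 = 1`, `u 1 = 0`, for `sinh c ≠ 0`, as an entire function;
if `sinh c = 0`, then division by zero makes it vanish identically. -/
def sinhProfile (c z : ℂ) : ℂ :=
  Complex.sinh (c * (1 - z)) / Complex.sinh c

namespace sinhProfile

lemma apply_zero {c : ℂ} (hc : Complex.sinh c ≠ 0) : sinhProfile c 0 = 1 := by
  simp [sinhProfile, hc]

variable (c : ℂ)

lemma apply_one : sinhProfile c 1 = 0 := by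
  simp [sinhProfile]

lemma hasDerivAt_mul_one_sub (z : ℂ) : HasDerivAt (fun w => c * (1 - w)) (-c) z := by
  simpa using ((hasDerivAt_id z).const_sub 1).const_mul c

lemma hasDerivAt (z : ℂ) :
    HasDerivAt (sinhProfile c) (Complex.cosh (c * (1 - z)) * -c / Complex.sinh c) z :=
  (hasDerivAt_mul_one_sub c z).csinh.div_const _

lemma hasDerivAt_cosh_div_sinh (z : ℂ) :
    HasDerivAt (fun w => Complex.cosh (c * (1 - w)) * -c / Complex.sinh c)
      (c ^ 2 * sinhProfile c z) z := by
  refine (((hasDerivAt_mul_one_sub c z).ccosh.mul_const (-c)).div_const _).congr_deriv ?_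
  rw [sinhProfile]
  ring

lemma deriv_deriv_clm_comp {F : Type*} [NormedAddCommGroup F] [NormedSpace ℝ F] (L : ℂ →L[ℝ] F) :
    deriv (deriv fun x : ℝ => L (sinhProfile c x)) = fun x : ℝ => L (c ^ 2 * sinhProfile c x) :=
  deriv_deriv_continuousLinearMap_comp L (fun x => (hasDerivAt c x).comp_ofReal)
    fun x => (hasDerivAt_cosh_div_sinh c x).comp_ofReal

lemma deriv_deriv_re :
    deriv (deriv fun x : ℝ => (sinhProfile c x).re) =
      fun x : ℝ => (c ^ 2 * sinhProfile c x).re :=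
  deriv_deriv_clm_comp c Complex.reCLM

lemma deriv_deriv_im :
    deriv (deriv fun x : ℝ => (sinhProfile c x).im) =
      fun x : ℝ => (c ^ 2 * sinhProfile c x).im :=
  deriv_deriv_clm_comp c Complex.imCLM

lemma re_eq (x : ℝ) :
    (sinhProfile c x).re =
      ((Real.cosh (c.re * (2 - x)) - Real.cos (2 * c.im) * Real.cosh (c.re * x)) *
          Real.cos (c.im * x) -
        Real.sin (2 * c.im) * Real.sin (c.im * x) * Real.cosh (c.re * x)) /
      (Real.cosh (2 * c.re) - Real.cos (2 * c.im)) := by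
  have re_arg : (c * (1 - x)).re = c.re * (1 - x) := by simp
  have im_arg : (c * (1 - x)).im = c.im * (1 - x) := by simp
  rw [sinhProfile, re_sinh_div_sinh, re_arg, im_arg,
    show c.re * (1 - x) + c.re = c.re * (2 - x) by ring,
    show c.im * (1 - x) - c.im = -(c.im * x) by ring,
    show c.re * (1 - x) - c.re = -(c.re * x) by ring,
    show c.im * (1 - x) + c.im = 2 * c.im - c.im * x by ring,
    Real.cos_neg, Real.cosh_neg, Real.cos_sub]
  ring

lemma im_eq (x : ℝ) :
    (sinhProfile c x).im =
      (Real.sin (2 * c.im) * Real.cos (c.im * x) * Real.sinh (c.re * x) -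
        (Real.sinh (c.re * (2 - x)) + Real.cos (2 * c.im) * Real.sinh (c.re * x)) *
          Real.sin (c.im * x)) /
      (Real.cosh (2 * c.re) - Real.cos (2 * c.im)) := by
  have re_arg : (c * (1 - x)).re = c.re * (1 - x) := by simp
  have im_arg : (c * (1 - x)).im = c.im * (1 - x) := by simp
  rw [sinhProfile, im_sinh_div_sinh, re_arg, im_arg,
    show c.re * (1 - x) + c.re = c.re * (2 - x) by ring,
    show c.im * (1 - x) - c.im = -(c.im * x) by ring,
    show c.re * (1 - x) - c.re = -(c.re * x) by ring,
    show c.im * (1 - x) + c.im = 2 * c.im - c.im * x by ring,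
    Real.sin_neg, Real.sinh_neg, Real.sin_sub]
  ring

end sinhProfile

/-- The complex number `λ² = (iμω - ω²) / (1 + iσω)` for which the system for `h` and `g` reads
`u'' = λ² u` with `u = h + ig`. -/
def symbol (σ μ ω : ℝ) : ℂ :=
  (-(ω : ℂ) ^ 2 + μ * ω * Complex.I) / (1 + σ * ω * Complex.I)

lemma one_add_mul_I_ne_zero (x : ℝ) : 1 + x * Complex.I ≠ 0 := fun h => by
  simpa using congrArg Complex.re h

namespace symbol

variable {σ μ ω : ℝ}

lemma denom_mul (σ μ ω : ℝ) :
    (1 + σ * ω * Complex.I) * symbol σ μ ω = -(ω : ℂ) ^ 2 + μ * ω * Complex.I :=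
  mul_div_cancel₀ _ (by exact_mod_cast one_add_mul_I_ne_zero (σ * ω))

lemma eq_ofReal_mul (σ μ ω : ℝ) :
    symbol σ μ ω = (ω / (1 + σ ^ 2 * ω ^ 2) : ℝ) *
      (((μ * σ - 1) * ω : ℝ) + (μ + σ * ω ^ 2 : ℝ) * Complex.I) := by
  have hd : (1 + σ ^ 2 * ω ^ 2 : ℂ) ≠ 0 := by
    exact_mod_cast (by positivity : (0 : ℝ) < 1 + σ ^ 2 * ω ^ 2).ne'
  have hn : (1 + σ * ω * Complex.I : ℂ) ≠ 0 := by
    exact_mod_cast one_add_mul_I_ne_zero (σ * ω)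
  rw [symbol, div_eq_iff hn]
  push_cast
  rw [div_mul_eq_mul_div, div_mul_eq_mul_div, eq_div_iff hd]
  linear_combination (-σ * ω ^ 2 * (μ + σ * ω ^ 2)) * Complex.I_sq

lemma re_eq (σ μ ω : ℝ) :
    (symbol σ μ ω).re = (μ * σ - 1) * ω ^ 2 / (1 + σ ^ 2 * ω ^ 2) := by
  rw [eq_ofReal_mul, Complex.re_ofReal_mul, Complex.add_re, Complex.ofReal_re,
    Complex.re_ofReal_mul, Complex.I_re, mul_zero, add_zero]
  ring

lemma im_pos (hω : 0 < ω) (hσμ : 0 < μ + σ * ω ^ 2) : 0 < (symbol σ μ ω).im := by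
  rw [eq_ofReal_mul, Complex.im_ofReal_mul, Complex.add_im, Complex.ofReal_im, zero_add,
    Complex.im_ofReal_mul, Complex.I_im, mul_one]
  positivity

lemma norm_eq_rfreq (hω : 0 ≤ ω) : ‖symbol σ μ ω‖ = rfreq σ μ ω := by
  rw [eq_ofReal_mul, norm_mul, Complex.norm_add_mul_I, Complex.norm_of_nonneg (by positivity),
    rfreq, mul_pow, div_mul_eq_mul_div]

lemma arg_eq_θfreq (hω : 0 < ω) (hσμ : 0 < μ + σ * ω ^ 2) :
    (symbol σ μ ω).arg = θfreq σ μ ω := by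
  rw [Complex.arg_of_im_pos (im_pos hω hσμ), norm_eq_rfreq hω.le, re_eq, div_div, θfreq]

lemma re_sqrt (hω : 0 < ω) (hσμ : 0 < μ + σ * ω ^ 2) :
    (symbol σ μ ω).sqrt.re = afreq σ μ ω := by
  rw [complex_sqrt_re, norm_eq_rfreq hω.le, arg_eq_θfreq hω hσμ, afreq]

lemma im_sqrt (hω : 0 < ω) (hσμ : 0 < μ + σ * ω ^ 2) :
    (symbol σ μ ω).sqrt.im = bfreq σ μ ω := by
  rw [complex_sqrt_im, norm_eq_rfreq hω.le, arg_eq_θfreq hω hσμ, bfreq]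

lemma sinh_sqrt_ne_zero (hω : 0 < ω) (hσμ : 0 < μ + σ * ω ^ 2) :
    Complex.sinh (symbol σ μ ω).sqrt ≠ 0 := by
  refine sinh_ne_zero_of_re_ne_zero (re_ne_zero_of_sq_im_ne_zero ?_)
  rw [sq_complex_sqrt]
  exact (im_pos hω hσμ).ne'

lemma system_of_eq_mul {u v : ℂ} (huv : v = symbol σ μ ω * u) :
    σ * ω * v.im - μ * ω * u.im - ω ^ 2 * u.re - v.re = 0 ∧
      ω ^ 2 * u.im + v.im + σ * ω * v.re - μ * ω * u.re = 0 := by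
  have complex_eq : (1 + σ * ω * Complex.I) * v = (-(ω : ℂ) ^ 2 + μ * ω * Complex.I) * u := by
    rw [huv, ← mul_assoc, denom_mul]
  have re_part := congrArg Complex.re complex_eq
  have im_part := congrArg Complex.im complex_eq
  simp only [Complex.mul_re, Complex.add_re, Complex.one_re, Complex.ofReal_re, Complex.ofReal_im,
    mul_zero, sub_zero, Complex.I_re, Complex.mul_im, zero_mul, add_zero, Complex.I_im, mul_one,
    sub_self, one_mul, Complex.add_im, Complex.one_im, zero_add, ← Complex.ofReal_pow,
    Complex.neg_re, neg_mul, Complex.neg_im, neg_zero] at re_part im_part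
  constructor <;> linarith

end symbol

theorem explicit_periodic_profile_solves_ODE_general
    {σ μ ω : ℝ} (hω : 0 < ω) (hσμ : 0 < μ + σ * ω ^ 2)
    {a b : ℝ} (ha : a = afreq σ μ ω) (hb : b = bfreq σ μ ω)
    {h g : ℝ → ℝ}
    (hh : h = fun x =>
      ((Real.cosh (a * (2 - x)) - Real.cos (2 * b) * Real.cosh (a * x)) * Real.cos (b * x) -
        Real.sin (2 * b) * Real.sin (b * x) * Real.cosh (a * x)) /
      (Real.cosh (2 * a) - Real.cos (2 * b)))
    (hg : g = fun x =>
      (Real.sin (2 * b) * Real.cos (b * x) * Real.sinh (a * x) -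
        (Real.sinh (a * (2 - x)) + Real.cos (2 * b) * Real.sinh (a * x)) * Real.sin (b * x)) /
      (Real.cosh (2 * a) - Real.cos (2 * b))) :
    (∀ x,
      σ * ω * deriv (deriv g) x - μ * ω * g x - ω ^ 2 * h x - deriv (deriv h) x = 0 ∧
      ω ^ 2 * g x + deriv (deriv g) x + σ * ω * deriv (deriv h) x - μ * ω * h x = 0) ∧
    h 0 = 1 ∧ h 1 = 0 ∧ g 0 = 0 ∧ g 1 = 0 := by
  rw [← symbol.re_sqrt hω hσμ] at ha
  rw [← symbol.im_sqrt hω hσμ] at hb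
  set c := (symbol σ μ ω).sqrt with hc
  have h_eq_re : h = fun x : ℝ => (sinhProfile c x).re := by
    simp only [hh, ha, hb, sinhProfile.re_eq]
  have g_eq_im : g = fun x : ℝ => (sinhProfile c x).im := by
    simp only [hg, ha, hb, sinhProfile.im_eq]
  have at_zero : sinhProfile c 0 = 1 :=
    sinhProfile.apply_zero (symbol.sinh_sqrt_ne_zero hω hσμ)
  have at_one : sinhProfile c 1 = 0 := sinhProfile.apply_one c
  refine ⟨fun x => ?_, by simp [h_eq_re, at_zero], by simp [h_eq_re, at_one],
    by simp [g_eq_im, at_zero], by simp [g_eq_im, at_one]⟩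
  rw [h_eq_re, g_eq_im, sinhProfile.deriv_deriv_re, sinhProfile.deriv_deriv_im]
  exact symbol.system_of_eq_mul (by rw [hc, sq_complex_sqrt])

/-- the explicit functions `h`, `g` solve the ordinary differential system
`σω g'' − μω g − ω² h − h'' = 0`, `ω² g + g'' + σω h'' − μω h = 0` on `[0,1]` with the
boundary conditions `h(0) = 1`, `h(1) = 0`, `g(0) = 0`, `g(1) = 0`. -/
theorem explicit_periodic_profile_solves_ODE
    (σ μ ω : ℝ) (hσ : 0 < σ) (hμ : 0 ≤ μ) (hω : 0 < ω)
    (a b : ℝ) (ha : a = afreq σ μ ω) (hb : b = bfreq σ μ ω)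
    (h g : ℝ → ℝ)
    (hh : h = fun x =>
      ((Real.cosh (a * (2 - x)) - Real.cos (2 * b) * Real.cosh (a * x)) * Real.cos (b * x) -
        Real.sin (2 * b) * Real.sin (b * x) * Real.cosh (a * x)) /
      (Real.cosh (2 * a) - Real.cos (2 * b)))
    (hg : g = fun x =>
      (Real.sin (2 * b) * Real.cos (b * x) * Real.sinh (a * x) -
        (Real.sinh (a * (2 - x)) + Real.cos (2 * b) * Real.sinh (a * x)) * Real.sin (b * x)) /
      (Real.cosh (2 * a) - Real.cos (2 * b))) :
    (∀ x ∈ Set.Icc (0:ℝ) 1,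
      σ * ω * deriv (deriv g) x - μ * ω * g x - ω ^ 2 * h x - deriv (deriv h) x = 0 ∧
      ω ^ 2 * g x + deriv (deriv g) x + σ * ω * deriv (deriv h) x - μ * ω * h x = 0) ∧
    h 0 = 1 ∧ h 1 = 0 ∧ g 0 = 0 ∧ g 1 = 0 := by
  have general := explicit_periodic_profile_solves_ODE_general hω (by positivity) ha hb hh hg
  exact ⟨fun x _ => general.1 x, general.2⟩
end
end

section
/- Let a > 0 and b > 0 be real numbers, and define h(x) := ((cosh(a(2−x)) − cos(2b)cosh(ax))cos(bx) − sin(2b)sin(bx)cosh(ax))/(cosh(2a) − cos(2b)) and g(x) := (sin(2b)cos(bx)sinh(ax) − (sinh(a(2−x)) + cos(2b)sinh(ax))sin(bx))/(cosh(2a) − cos(2b)). Then (1/2)∫₀¹ (g(x)² − h(x)²) dx = (cosh(2a)cos(2b) − 1)/(2(cosh(2a) − cos(2b))²) + (b·sin(2b) − a·sinh(2a))/(4(a²+b²)(cosh(2a) − cos(2b))). -/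
/-!
Put `w = a + ib` and `D = cosh 2a - cos 2b = 2 |sinh w|²`. The addition formulas give
`D (h + ig) = 2 sinh (w (1 - x)) sinh (conj w)`, that is, `h + ig = sinh (w (1 - x)) / sinh w`.
Therefore `∫₀¹ (g² - h²)` is the real part of
`-∫₀¹ sinh² (w (1 - x)) / sinh² w = (1 / sinh² w - coth w / w) / 2`,
and the two terms of the formula are half the real parts of these two summands.
-/

open Real intervalIntegral MeasureTheory

noncomputable section

/-- The profile `h`. -/
def hProf (a b : ℝ) (x : ℝ) : ℝ :=
  ((Real.cosh (a * (2 - x)) - Real.cos (2 * b) * Real.cosh (a * x)) * Real.cos (b * x) -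
    Real.sin (2 * b) * Real.sin (b * x) * Real.cosh (a * x)) /
  (Real.cosh (2 * a) - Real.cos (2 * b))

/-- The profile `g`. -/
def gProf (a b : ℝ) (x : ℝ) : ℝ :=
  (Real.sin (2 * b) * Real.cos (b * x) * Real.sinh (a * x) -
    (Real.sinh (a * (2 - x)) + Real.cos (2 * b) * Real.sinh (a * x)) * Real.sin (b * x)) /
  (Real.cosh (2 * a) - Real.cos (2 * b))

open scoped ComplexConjugate

lemma ccosh_add_mul_I (x y : ℂ) :
    Complex.cosh (x + y * Complex.I) =
      Complex.cosh x * Complex.cos y + Complex.sinh x * Complex.sin y * Complex.I := by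
  rw [Complex.cosh_add, Complex.cosh_mul_I, Complex.sinh_mul_I, mul_assoc]

lemma re_ccosh (z : ℂ) : (Complex.cosh z).re = cosh z.re * cos z.im := by
  conv_lhs => rw [← Complex.re_add_im z]
  simp [ccosh_add_mul_I, ← Complex.ofReal_cosh, ← Complex.ofReal_cos, ← Complex.ofReal_sinh,
    ← Complex.ofReal_sin, -Complex.re_add_im]

lemma two_mul_csinh_mul_csinh (x y : ℂ) :
    2 * (Complex.sinh x * Complex.sinh y) = Complex.cosh (x + y) - Complex.cosh (x - y) := by
  rw [Complex.cosh_add, Complex.cosh_sub]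
  ring

lemma two_mul_csinh_mul_ccosh (x y : ℂ) :
    2 * (Complex.sinh x * Complex.cosh y) = Complex.sinh (x + y) + Complex.sinh (x - y) := by
  rw [Complex.sinh_add, Complex.sinh_sub]
  ring

lemma csinh_sq (z : ℂ) : Complex.sinh z ^ 2 = (Complex.cosh (2 * z) - 1) / 2 := by
  rw [Complex.cosh_two_mul, Complex.cosh_sq]
  ring

lemma two_mul_csinh_mul_csinh_conj (w : ℂ) :
    2 * (Complex.sinh w * Complex.sinh (conj w)) = ↑(cosh (2 * w.re) - cos (2 * w.im)) := by
  rw [two_mul_csinh_mul_csinh, Complex.add_conj, Complex.sub_conj, Complex.cosh_mul_I]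
  push_cast
  rfl

lemma two_mul_csinh_conj_mul_ccosh (w : ℂ) :
    2 * (Complex.sinh (conj w) * Complex.cosh w) =
      sinh (2 * w.re) - sin (2 * w.im) * Complex.I := by
  have hsub : conj w - w = -((2 * w.im : ℝ) * Complex.I) := by rw [← Complex.sub_conj, neg_sub]
  rw [two_mul_csinh_mul_ccosh, add_comm (conj w), Complex.add_conj, hsub, Complex.sinh_neg,
    Complex.sinh_mul_I]
  push_cast
  ring

lemma two_mul_normSq_csinh (w : ℂ) :
    2 * Complex.normSq (Complex.sinh w) = cosh (2 * w.re) - cos (2 * w.im) := by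
  apply Complex.ofReal_injective
  rw [← two_mul_csinh_mul_csinh_conj, Complex.sinh_conj, Complex.mul_conj]
  push_cast
  rfl

lemma csinh_ne_zero_iff {w : ℂ} :
    Complex.sinh w ≠ 0 ↔ cosh (2 * w.re) - cos (2 * w.im) ≠ 0 := by
  simp [← two_mul_normSq_csinh]

lemma re_inv_csinh_sq (w : ℂ) :
    ((Complex.sinh w ^ 2)⁻¹).re =
      2 * (cosh (2 * w.re) * cos (2 * w.im) - 1) / (cosh (2 * w.re) - cos (2 * w.im)) ^ 2 := by
  have hre : (Complex.sinh w ^ 2).re = (cosh (2 * w.re) * cos (2 * w.im) - 1) / 2 := by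
    rw [csinh_sq]
    simp [re_ccosh]
  rw [Complex.inv_re, hre, map_pow, ← two_mul_normSq_csinh]
  ring

lemma ccosh_div_csinh_eq {w : ℂ} (hw : Complex.sinh w ≠ 0) :
    Complex.cosh w / Complex.sinh w =
      (sinh (2 * w.re) - sin (2 * w.im) * Complex.I) / ↑(cosh (2 * w.re) - cos (2 * w.im)) := by
  have hw' : Complex.sinh (conj w) ≠ 0 := by rwa [Complex.sinh_conj, map_ne_zero]
  rw [← two_mul_csinh_conj_mul_ccosh, ← two_mul_csinh_mul_csinh_conj]
  field_simp

lemma re_ccosh_div_csinh_div {w : ℂ} (hw : Complex.sinh w ≠ 0) :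
    (Complex.cosh w / Complex.sinh w / w).re =
      (w.re * sinh (2 * w.re) - w.im * sin (2 * w.im)) /
        ((w.re ^ 2 + w.im ^ 2) * (cosh (2 * w.re) - cos (2 * w.im))) := by
  rw [ccosh_div_csinh_eq hw, div_right_comm, Complex.div_ofReal_re, Complex.div_re]
  simp only [Complex.sub_re, Complex.sub_im, Complex.mul_re, Complex.mul_im, Complex.ofReal_re,
    Complex.ofReal_im, Complex.I_re, Complex.I_im, Complex.normSq_apply]
  field_simp
  ring

lemma integral_ccosh_mul {z : ℂ} (hz : z ≠ 0) (a b : ℝ) :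
    ∫ x in a..b, Complex.cosh (z * x) = (Complex.sinh (z * b) - Complex.sinh (z * a)) / z := by
  rw [sub_div]
  refine integral_eq_sub_of_hasDerivAt (f := fun x : ℝ ↦ Complex.sinh (z * x) / z) (fun x _ ↦ ?_)
    (Continuous.intervalIntegrable (by fun_prop) a b)
  have hlin : HasDerivAt (fun y : ℂ ↦ z * y) z x := hasDerivAt_const_mul z
  simpa [hz] using (hlin.csinh.div_const z).comp_ofReal

lemma integral_csinh_mul_sq {z : ℂ} (hz : z ≠ 0) (a b : ℝ) :
    ∫ x in a..b, Complex.sinh (z * x) ^ 2 =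
      (Complex.sinh (2 * z * b) - Complex.sinh (2 * z * a)) / (4 * z) - (b - a) / 2 := by
  have hint : IntervalIntegrable (fun x : ℝ ↦ Complex.cosh (2 * z * x)) volume a b :=
    Continuous.intervalIntegrable (by fun_prop) a b
  simp_rw [csinh_sq, ← mul_assoc]
  rw [intervalIntegral.integral_div, intervalIntegral.integral_sub hint intervalIntegrable_const,
    integral_ccosh_mul (mul_ne_zero two_ne_zero hz), intervalIntegral.integral_const]
  simp only [Complex.real_smul, Complex.ofReal_sub, mul_one]
  field_simp
  ring

lemma two_mul_csinh_mul_csinh_conj_eq_numerators (w : ℂ) (x : ℝ) :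
    2 * (Complex.sinh (w * (1 - x : ℝ)) * Complex.sinh (conj w)) =
      ↑((cosh (w.re * (2 - x)) - cos (2 * w.im) * cosh (w.re * x)) * cos (w.im * x) -
          sin (2 * w.im) * sin (w.im * x) * cosh (w.re * x)) +
      ↑(sin (2 * w.im) * cos (w.im * x) * sinh (w.re * x) -
          (sinh (w.re * (2 - x)) + cos (2 * w.im) * sinh (w.re * x)) * sin (w.im * x)) *
        Complex.I := by
  have hadd : w * (1 - x : ℝ) + conj w =
      (w.re * (2 - x) : ℝ) + (-(w.im * x) : ℝ) * Complex.I := by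
    apply Complex.ext <;> simp <;> ring
  have hsub : w * (1 - x : ℝ) - conj w =
      (-(w.re * x) : ℝ) + (2 * w.im - w.im * x : ℝ) * Complex.I := by
    apply Complex.ext <;> simp <;> ring
  rw [two_mul_csinh_mul_csinh, hadd, hsub, ccosh_add_mul_I, ccosh_add_mul_I]
  push_cast
  rw [Complex.cos_sub, Complex.sin_sub, Complex.cos_neg, Complex.sin_neg, Complex.cosh_neg,
    Complex.sinh_neg]
  ring

lemma hProf_add_gProf_mul_I {w : ℂ} (hw : Complex.sinh w ≠ 0) (x : ℝ) :
    hProf w.re w.im x + gProf w.re w.im x * Complex.I =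
      Complex.sinh (w * (1 - x : ℝ)) / Complex.sinh w := by
  have hw' : Complex.sinh (conj w) ≠ 0 := by rwa [Complex.sinh_conj, map_ne_zero]
  calc (hProf w.re w.im x + gProf w.re w.im x * Complex.I : ℂ)
      = 2 * (Complex.sinh (w * (1 - x : ℝ)) * Complex.sinh (conj w)) /
          ↑(cosh (2 * w.re) - cos (2 * w.im)) := by
        rw [two_mul_csinh_mul_csinh_conj_eq_numerators, hProf, gProf, Complex.ofReal_div,
          Complex.ofReal_div]
        ring
    _ = Complex.sinh (w * (1 - x : ℝ)) / Complex.sinh w := by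
        rw [← two_mul_csinh_mul_csinh_conj, mul_div_mul_left _ _ two_ne_zero,
          mul_div_mul_right _ _ hw']

lemma gProf_sq_sub_hProf_sq {w : ℂ} (hw : Complex.sinh w ≠ 0) (x : ℝ) :
    gProf w.re w.im x ^ 2 - hProf w.re w.im x ^ 2 =
      -((Complex.sinh (w * (1 - x : ℝ)) / Complex.sinh w) ^ 2).re := by
  rw [← hProf_add_gProf_mul_I hw]
  simp [sq]

lemma integral_csinh_div_csinh_sq {w : ℂ} (hw : Complex.sinh w ≠ 0) :
    ∫ x in (0 : ℝ)..1, (Complex.sinh (w * (1 - x : ℝ)) / Complex.sinh w) ^ 2 =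
      (Complex.cosh w / Complex.sinh w / w - (Complex.sinh w ^ 2)⁻¹) / 2 := by
  have hw0 : w ≠ 0 := by
    rintro rfl
    simp at hw
  simp_rw [div_pow]
  rw [intervalIntegral.integral_div,
    integral_comp_sub_left (fun s : ℝ ↦ Complex.sinh (w * s) ^ 2) 1, integral_csinh_mul_sq hw0]
  simp only [sub_self, sub_zero, Complex.ofReal_zero, Complex.ofReal_one, mul_zero, mul_one,
    Complex.sinh_zero, Complex.sinh_two_mul]
  field_simp
  ring

lemma integral_gProf_sq_sub_hProf_sq {w : ℂ} (hw : Complex.sinh w ≠ 0) :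
    ∫ x in (0 : ℝ)..1, (gProf w.re w.im x ^ 2 - hProf w.re w.im x ^ 2) =
      ((Complex.sinh w ^ 2)⁻¹.re - (Complex.cosh w / Complex.sinh w / w).re) / 2 := by
  have hint : IntervalIntegrable
      (fun x : ℝ ↦ (Complex.sinh (w * (1 - x : ℝ)) / Complex.sinh w) ^ 2) volume 0 1 :=
    Continuous.intervalIntegrable (by fun_prop) 0 1
  calc ∫ x in (0 : ℝ)..1, (gProf w.re w.im x ^ 2 - hProf w.re w.im x ^ 2)
      = -∫ x in (0 : ℝ)..1, ((Complex.sinh (w * (1 - x : ℝ)) / Complex.sinh w) ^ 2).re := by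
        simp_rw [gProf_sq_sub_hProf_sq hw, intervalIntegral.integral_neg]
    _ = -(∫ x in (0 : ℝ)..1, (Complex.sinh (w * (1 - x : ℝ)) / Complex.sinh w) ^ 2).re :=
        congrArg Neg.neg (Complex.reCLM.intervalIntegral_comp_comm hint)
    _ = ((Complex.sinh w ^ 2)⁻¹.re - (Complex.cosh w / Complex.sinh w / w).re) / 2 := by
        rw [integral_csinh_div_csinh_sq hw, Complex.div_ofNat_re, Complex.sub_re]
        ring

theorem profile_sq_difference_integral_general (a b : ℝ) (hD : cosh (2 * a) - cos (2 * b) ≠ 0) :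
    (1 / 2) * ∫ x in (0 : ℝ)..1, (gProf a b x ^ 2 - hProf a b x ^ 2) =
      (cosh (2 * a) * cos (2 * b) - 1) / (2 * (cosh (2 * a) - cos (2 * b)) ^ 2) +
      (b * sin (2 * b) - a * sinh (2 * a)) /
        (4 * (a ^ 2 + b ^ 2) * (cosh (2 * a) - cos (2 * b))) := by
  have hw : Complex.sinh ⟨a, b⟩ ≠ 0 := csinh_ne_zero_iff.mpr hD
  rw [integral_gProf_sq_sub_hProf_sq hw, re_inv_csinh_sq, re_ccosh_div_csinh_div hw]
  field_simp
  ring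

/-- `(1/2)∫₀¹ (g² − h²) = (cosh(2a)cos(2b) − 1)/(2(cosh(2a) − cos(2b))²)
 + (b sin(2b) − a sinh(2a))/(4(a²+b²)(cosh(2a) − cos(2b)))`. -/
theorem profile_sq_difference_integral (a b : ℝ) (ha : 0 < a) (hb : 0 < b) :
    (1 / 2) * ∫ x in (0:ℝ)..1, ((gProf a b x) ^ 2 - (hProf a b x) ^ 2) =
      (Real.cosh (2 * a) * Real.cos (2 * b) - 1) /
        (2 * (Real.cosh (2 * a) - Real.cos (2 * b)) ^ 2) +
      (b * Real.sin (2 * b) - a * Real.sinh (2 * a)) /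
        (4 * (a ^ 2 + b ^ 2) * (Real.cosh (2 * a) - Real.cos (2 * b))) := by
  have hlt : cos (2 * b) < cosh (2 * a) :=
    (cos_le_one _).trans_lt (one_lt_cosh.mpr (by positivity))
  exact profile_sq_difference_integral_general a b (sub_pos.mpr hlt).ne'
end
end
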